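/- Let E ⊆ ℝ⁴ = ℍ×ℝ be precisely monotone. Assume the origin (0,0,0,0) ∈ ∂E, that (1,0,0,0) ∈ Int(E), and that there exist real numbers a, b, c and an open neighborhood Ω of the origin in ℝ⁴ such that ∂E ∩ Ω = Σ ∩ Ω, where Σ = {(x,y,u,t) ∈ ℝ⁴ : x = ay + bt + cu}. Then ∂E = Σ. -/

import Mathlib

/- The group `ℍ×ℝ`: `ℝ⁴` with coordinates `(x,y,u,t)` and law
`(x,y,u,t)·(x',y',u',t') = (x+x', y+y', u+u', t+t'+2(yx'−y'x))`. -/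

noncomputable section

/-- Group law of `ℍ×ℝ` on `ℝ⁴`. -/
def hmul (p q : Fin 4 → ℝ) : Fin 4 → ℝ :=
  ![p 0 + q 0, p 1 + q 1, p 2 + q 2, p 3 + q 3 + 2 * (p 1 * q 0 - q 1 * p 0)]

/-- Horizontal convexity in `ℍ×ℝ`. -/
def HRConvex (C : Set (Fin 4 → ℝ)) : Prop :=
  ∀ p ∈ C, ∀ a b c : ℝ, hmul p ![a, b, c, 0] ∈ C →
    ∀ s : ℝ, 0 ≤ s → s ≤ 1 → hmul p ![s * a, s * b, s * c, 0] ∈ C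

/-- Precise monotonicity in `ℍ×ℝ`. -/
def PreciselyMonotone (E : Set (Fin 4 → ℝ)) : Prop := HRConvex E ∧ HRConvex Eᶜ

/-!
Write the hyperplane as `ker ℓ`. Horizontal lines are affine lines, so `ℓ` changes sign exactly once
along a horizontal line transverse to `ker ℓ`. If near the origin `E` is the half-space `0 < ℓ` up
to points of `ker ℓ`, precise monotonicity propagates this along every horizontal line meeting
`ker ℓ` transversally near the origin. A second propagation reaches a generic point `p`: join it
by a horizontal line to a point `z ∈ ker ℓ` that is itself horizontally aligned with the origin.
The points of this line close to `z` are horizontally aligned with points of `ker ℓ` close to the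
origin, so their side is known from the first propagation. The exceptional points lie between
generic ones on horizontal lines.

That `E` is a half-space near the origin, after replacing `ℓ` by `-ℓ` if necessary, holds because
`frontier E ⊆ ker ℓ` there, so each open side of `ker ℓ` lies in `E` or in `Eᶜ`; if both lay in the
same one, horizontal convexity would put a neighbourhood of the origin into it.
-/

open Set Filter Topology

section TopologicalVectorSpace

variable {V : Type*} [AddCommGroup V] [Module ℝ V] [TopologicalSpace V]

theorem eventually_add_smul_mem [ContinuousAdd V] [ContinuousSMul ℝ V] {W : Set V} {p : V}
    (hW : IsOpen W) (hp : p ∈ W) (d : V) : ∀ᶠ s in 𝓝 (0 : ℝ), p + s • d ∈ W := by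
  have hcont : Continuous fun s : ℝ => p + s • d := by fun_prop
  exact hcont.continuousAt.eventually_mem (hW.mem_nhds (by simpa using hp))

/-- On `W`, the set `E` is the half-space `0 < ℓ`, up to an arbitrary set of points of `ker ℓ`. -/
structure IsHalfSpaceOn (ℓ : V →L[ℝ] ℝ) (E W : Set V) : Prop where
  mem_of_pos : ∀ v ∈ W, 0 < ℓ v → v ∈ E
  notMem_of_neg : ∀ v ∈ W, ℓ v < 0 → v ∉ E

variable {ℓ : V →L[ℝ] ℝ} {E W : Set V}

theorem IsHalfSpaceOn.compl (h : IsHalfSpaceOn ℓ E W) : IsHalfSpaceOn (-ℓ) Eᶜ W where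
  mem_of_pos v hv hpos := h.notMem_of_neg v hv (neg_pos.1 hpos)
  notMem_of_neg v hv hneg := not_not.2 (h.mem_of_pos v hv (neg_lt_zero.1 hneg))

theorem IsHalfSpaceOn.closure_eq [ContinuousAdd V] [ContinuousSMul ℝ V]
    (h : IsHalfSpaceOn ℓ E univ) (hℓ : ℓ ≠ 0) : closure E = {v | 0 ≤ ℓ v} := by
  apply subset_antisymm
  · refine closure_minimal (fun v hv => ?_) (isClosed_le continuous_const ℓ.continuous)
    exact not_lt.1 fun hneg => h.notMem_of_neg v trivial hneg hv
  · calc {v | 0 ≤ ℓ v} = ℓ ⁻¹' closure (Ioi 0) := by rw [closure_Ioi]; rfl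
      _ = closure (ℓ ⁻¹' Ioi 0) :=
        (ℓ.isOpenMap_of_ne_zero hℓ).preimage_closure_eq_closure_preimage ℓ.continuous _
      _ ⊆ closure E := closure_mono fun v hv => h.mem_of_pos v trivial hv

theorem IsHalfSpaceOn.frontier_eq [ContinuousAdd V] [ContinuousSMul ℝ V]
    (h : IsHalfSpaceOn ℓ E univ) (hℓ : ℓ ≠ 0) : frontier E = {v | ℓ v = 0} := by
  rw [frontier_eq_closure_inter_closure, h.closure_eq hℓ, h.compl.closure_eq (neg_ne_zero.2 hℓ)]
  ext v
  simp [le_antisymm_iff, and_comm]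

theorem subset_or_subset_compl_of_disjoint_frontier {X : Type*} [TopologicalSpace X] {s t : Set X}
    (ht : IsPreconnected t) (hst : Disjoint t (frontier s)) : t ⊆ s ∨ t ⊆ sᶜ := by
  have hcover : t ⊆ interior s ∪ interior sᶜ := by
    rw [← compl_frontier_eq_union_interior]
    exact hst.subset_compl_right
  have hdisj : Disjoint (interior s) (interior sᶜ) :=
    disjoint_compl_right.mono interior_subset interior_subset
  exact (ht.subset_or_subset isOpen_interior isOpen_interior hdisj hcover).imp
    (·.trans interior_subset) (·.trans interior_subset)

theorem inter_pos_subset_or_subset_compl [ContinuousAdd V] [ContinuousSMul ℝ V]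
    (hW : Convex ℝ W) (hfr : frontier E ∩ W ⊆ {v | ℓ v = 0}) :
    W ∩ {v | 0 < ℓ v} ⊆ E ∨ W ∩ {v | 0 < ℓ v} ⊆ Eᶜ := by
  have hconv : Convex ℝ (W ∩ {v | 0 < ℓ v}) :=
    hW.inter (convex_halfSpace_gt ℓ.toLinearMap.isLinear 0)
  refine subset_or_subset_compl_of_disjoint_frontier hconv.isPreconnected ?_
  exact disjoint_left.2 fun v hv hvfr => hv.2.ne' (hfr ⟨hvfr, hv.1⟩)

end TopologicalVectorSpace

/-- The tangent vector `d` is horizontal at `p`: the line `s ↦ p + s • d` is a horizontal line,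
namely `s ↦ p · (s d₀, s d₁, s d₂, 0)`. -/
def IsHorizontal (p d : Fin 4 → ℝ) : Prop :=
  d 3 = 2 * (p 1 * d 0 - d 1 * p 0)

section PreciselyMonotone

variable {C E W : Set (Fin 4 → ℝ)} {p d z m q : Fin 4 → ℝ} {ℓ : (Fin 4 → ℝ) →L[ℝ] ℝ}

theorem isHorizontal_zero_iff : IsHorizontal 0 d ↔ d 3 = 0 := by
  simp [IsHorizontal]

theorem IsHorizontal.hmul_add_smul (hd : IsHorizontal p d) (r s : ℝ) :
    hmul (p + r • d) ![s * d 0, s * d 1, s * d 2, 0] = p + (r + s) • d := by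
  unfold IsHorizontal at hd
  ext i
  fin_cases i <;> simp only [hmul, Pi.add_apply, Pi.smul_apply, smul_eq_mul, Matrix.cons_val,
    Fin.reduceFinMk, Fin.zero_eta, Fin.mk_one, Matrix.cons_val_zero, Matrix.cons_val_one]
  · ring
  · ring
  · ring
  · linear_combination -s * hd

theorem HRConvex.ordConnected_preimage (hC : HRConvex C) (hd : IsHorizontal p d) :
    ((fun s : ℝ => p + s • d) ⁻¹' C).OrdConnected := by
  refine ⟨fun r hr t ht s hs => ?_⟩
  rcases (hs.1.trans hs.2).eq_or_lt with rfl | hrt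
  · rwa [le_antisymm hs.2 hs.1]
  · have hpos : 0 < t - r := sub_pos.2 hrt
    have hend : hmul (p + r • d) ![(t - r) * d 0, (t - r) * d 1, (t - r) * d 2, 0] ∈ C := by
      rwa [hd.hmul_add_smul, add_sub_cancel]
    have hmem := hC _ hr _ _ _ hend ((s - r) / (t - r))
      (div_nonneg (sub_nonneg.2 hs.1) hpos.le)
      ((div_le_one hpos).2 (sub_le_sub_right hs.2 r))
    rwa [← mul_assoc, ← mul_assoc, ← mul_assoc, div_mul_cancel₀ _ hpos.ne', hd.hmul_add_smul,
      add_sub_cancel] at hmem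

theorem HRConvex.mem_of_eventually_add_smul_mem (hC : HRConvex C) (hd : IsHorizontal p d)
    (h : ∀ᶠ s in 𝓝[≠] (0 : ℝ), p + s • d ∈ C) : p ∈ C := by
  obtain ⟨r, hr, hr0⟩ := ((h.filter_mono (nhdsLT_le_nhdsNE 0)).and self_mem_nhdsWithin).exists
  obtain ⟨t, ht, ht0⟩ := ((h.filter_mono (nhdsGT_le_nhdsNE 0)).and self_mem_nhdsWithin).exists
  simpa using (hC.ordConnected_preimage hd).out hr ht ⟨le_of_lt hr0, le_of_lt ht0⟩

theorem PreciselyMonotone.compl (hE : PreciselyMonotone E) : PreciselyMonotone Eᶜ :=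
  ⟨hE.2, by rw [compl_compl]; exact hE.1⟩

theorem PreciselyMonotone.add_mem_of_eventually (hE : PreciselyMonotone E) (hd : IsHorizontal p d)
    (hpos : ∀ᶠ s in 𝓝[>] (0 : ℝ), p + s • d ∈ E)
    (hneg : ∀ᶠ s in 𝓝[<] (0 : ℝ), p + s • d ∉ E) : p + d ∈ E := by
  obtain ⟨r, hr, hr0⟩ := (hneg.and self_mem_nhdsWithin).exists
  obtain ⟨t, ht, ht0, ht1⟩ := (hpos.and (Ioo_mem_nhdsGT zero_lt_one)).exists
  by_contra hone
  have hone' : p + (1 : ℝ) • d ∈ Eᶜ := by rwa [one_smul]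
  exact (hE.2.ordConnected_preimage hd).out hr hone' ⟨(lt_trans hr0 ht0).le, ht1.le⟩ ht

theorem IsHalfSpaceOn.mem_of_isHorizontal_sub (h : IsHalfSpaceOn ℓ E W)
    (hE : PreciselyMonotone E) (hW : IsOpen W) (hm : m ∈ W) (hℓm : ℓ m = 0)
    (hmq : IsHorizontal m (q - m)) (hq : 0 < ℓ q) : q ∈ E := by
  have hline (s : ℝ) : ℓ (m + s • (q - m)) = s * ℓ q := by simp [hℓm]
  have hnear := eventually_add_smul_mem hW hm (q - m)
  rw [← add_sub_cancel m q]
  apply hE.add_mem_of_eventually hmq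
  · filter_upwards [hnear.filter_mono nhdsWithin_le_nhds, self_mem_nhdsWithin] with s hs hs0
    exact h.mem_of_pos _ hs (by rw [hline]; exact mul_pos hs0 hq)
  · filter_upwards [hnear.filter_mono nhdsWithin_le_nhds, self_mem_nhdsWithin] with s hs hs0
    exact h.notMem_of_neg _ hs (by rw [hline]; exact mul_neg_of_neg_of_pos hs0 hq)

theorem IsHalfSpaceOn.notMem_of_isHorizontal_sub (h : IsHalfSpaceOn ℓ E W)
    (hE : PreciselyMonotone E) (hW : IsOpen W) (hm : m ∈ W) (hℓm : ℓ m = 0)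
    (hmq : IsHorizontal m (q - m)) (hq : ℓ q < 0) : q ∉ E :=
  h.compl.mem_of_isHorizontal_sub hE.compl hW hm (by simpa using hℓm) hmq (by simpa using hq)

/- With `m = κ • d + d₃ • e₃`, alignment of `s • m` with `z + s • d` holds for every `κ`, because
`e₃` is central and `d` is horizontal at `z`; the condition `ℓ m = 0` determines `κ`. -/
theorem exists_ker_isHorizontal_smul (hz : IsHorizontal 0 z) (hd : IsHorizontal z d)
    (hℓd : ℓ d ≠ 0) :
    ∃ m, ℓ m = 0 ∧ ∀ s : ℝ, IsHorizontal (s • m) (z + s • d - s • m) := by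
  set e₃ : Fin 4 → ℝ := Pi.single 3 1
  refine ⟨-(d 3 * ℓ e₃ / ℓ d) • d + d 3 • e₃, ?_, fun s => ?_⟩
  · simp only [map_add, map_smul, smul_eq_mul]
    field_simp
    ring
  · rw [isHorizontal_zero_iff] at hz
    unfold IsHorizontal at hd ⊢
    have he (i : Fin 4) (hi : i ≠ 3) : e₃ i = 0 := Pi.single_eq_of_ne hi _
    have he3 : e₃ 3 = 1 := Pi.single_eq_same _ _
    simp only [Pi.sub_apply, Pi.add_apply, Pi.smul_apply, smul_eq_mul, hz, he3, he 0 (by decide),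
      he 1 (by decide)]
    linear_combination s * (d 3 * ℓ e₃ / ℓ d) * hd

theorem IsHalfSpaceOn.mem_of_isHorizontal_zero_of_isHorizontal_sub (h : IsHalfSpaceOn ℓ E W)
    (hE : PreciselyMonotone E) (hW : IsOpen W) (h0 : 0 ∈ W) (hz : IsHorizontal 0 z) (hℓz : ℓ z = 0)
    (hzp : IsHorizontal z (p - z)) (hp : 0 < ℓ p) : p ∈ E := by
  have hline (s : ℝ) : ℓ (z + s • (p - z)) = s * ℓ p := by simp [hℓz]
  obtain ⟨m, hℓm, hm⟩ := exists_ker_isHorizontal_smul (ℓ := ℓ) hz hzp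
    (by simpa [hℓz] using hp.ne')
  have hℓsm (s : ℝ) : ℓ (s • m) = 0 := by simp [hℓm]
  have hnear : ∀ᶠ s in 𝓝 (0 : ℝ), s • m ∈ W := by
    simpa only [zero_add] using eventually_add_smul_mem hW h0 m
  rw [← add_sub_cancel z p]
  apply hE.add_mem_of_eventually hzp
  · filter_upwards [hnear.filter_mono nhdsWithin_le_nhds, self_mem_nhdsWithin] with s hs hs0
    exact h.mem_of_isHorizontal_sub hE hW hs (hℓsm s) (hm s)
      (by rw [hline]; exact mul_pos hs0 hp)
  · filter_upwards [hnear.filter_mono nhdsWithin_le_nhds, self_mem_nhdsWithin] with s hs hs0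
    exact h.notMem_of_isHorizontal_sub hE hW hs (hℓsm s) (hm s)
      (by rw [hline]; exact mul_neg_of_neg_of_pos hs0 hp)

theorem exists_isHorizontal_zero_mem_ker (ℓ : (Fin 4 → ℝ) →L[ℝ] ℝ) :
    ∃ z : Fin 4 → ℝ, IsHorizontal 0 z ∧ ℓ z = 0 ∧ 0 < z 0 ^ 2 + z 1 ^ 2 := by
  set e : Fin 4 → Fin 4 → ℝ := fun i => Pi.single i 1
  by_cases hu : ℓ (e 2) = 0
  · by_cases hx : ℓ (e 0) = 0
    · exact ⟨e 0, by simp [IsHorizontal, e], hx, by simp [e]⟩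
    · refine ⟨ℓ (e 1) • e 0 - ℓ (e 0) • e 1, by simp [IsHorizontal, e], ?_, ?_⟩
      · simp [mul_comm]
      · have hsq : 0 < ℓ (e 1) ^ 2 + ℓ (e 0) ^ 2 := by positivity
        simpa [e] using hsq
  · refine ⟨ℓ (e 2) • e 0 - ℓ (e 0) • e 2, by simp [IsHorizontal, e], ?_, ?_⟩
    · simp [mul_comm]
    · have hsq : 0 < ℓ (e 2) ^ 2 := by positivity
      simpa [e] using hsq

theorem IsHalfSpaceOn.mem_of_pos_of_ne (h : IsHalfSpaceOn ℓ E W) (hE : PreciselyMonotone E)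
    (hW : IsOpen W) (h0 : 0 ∈ W) (hz : IsHorizontal 0 z) (hℓz : ℓ z = 0)
    (hzp : z 1 * p 0 - p 1 * z 0 ≠ 0) (hp : 0 < ℓ p) : p ∈ E := by
  set l := p 3 / (2 * (z 1 * p 0 - p 1 * z 0)) with hl
  have hlp : p 3 = l * (2 * (z 1 * p 0 - p 1 * z 0)) := by rw [hl]; field_simp
  have hz3 : z 3 = 0 := isHorizontal_zero_iff.1 hz
  refine h.mem_of_isHorizontal_zero_of_isHorizontal_sub (z := l • z) hE hW h0
    (isHorizontal_zero_iff.2 (by simp [hz3])) (by simp [hℓz]) ?_ hp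
  simp only [IsHorizontal, Pi.sub_apply, Pi.smul_apply, smul_eq_mul, hz3]
  linear_combination hlp

theorem IsHalfSpaceOn.mem_of_pos_global (h : IsHalfSpaceOn ℓ E W) (hE : PreciselyMonotone E)
    (hW : IsOpen W) (h0 : 0 ∈ W) (hp : 0 < ℓ p) : p ∈ E := by
  obtain ⟨z, hz, hℓz, hzpos⟩ := exists_isHorizontal_zero_mem_ker ℓ
  by_cases hzp : z 1 * p 0 - p 1 * z 0 = 0
  · set d : Fin 4 → ℝ := ![z 1, -z 0, 0, 2 * (p 1 * z 1 + z 0 * p 0)]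
    have hd : IsHorizontal p d := by simp [IsHorizontal, d]
    have hpos : ∀ᶠ s in 𝓝 (0 : ℝ), 0 < ℓ (p + s • d) :=
      eventually_add_smul_mem (isOpen_lt continuous_const ℓ.continuous) hp d
    apply hE.1.mem_of_eventually_add_smul_mem hd
    filter_upwards [hpos.filter_mono nhdsWithin_le_nhds, self_mem_nhdsWithin] with s hs hs0
    have hgeneric : z 1 * (p + s • d) 0 - (p + s • d) 1 * z 0 = s * (z 0 ^ 2 + z 1 ^ 2) := by
      simp only [d, Pi.add_apply, Pi.smul_apply, smul_eq_mul, Matrix.cons_val_zero,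
        Matrix.cons_val_one]
      linear_combination hzp
    exact h.mem_of_pos_of_ne hE hW h0 hz hℓz (hgeneric ▸ mul_ne_zero hs0 hzpos.ne') hs
  · exact h.mem_of_pos_of_ne hE hW h0 hz hℓz hzp hp

theorem IsHalfSpaceOn.univ_of_preciselyMonotone (h : IsHalfSpaceOn ℓ E W)
    (hE : PreciselyMonotone E) (hW : IsOpen W) (h0 : 0 ∈ W) : IsHalfSpaceOn ℓ E univ where
  mem_of_pos _ _ hpos := h.mem_of_pos_global hE hW h0 hpos
  notMem_of_neg _ _ hneg := h.compl.mem_of_pos_global hE.compl hW h0 (by simpa using hneg)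

theorem HRConvex.mem_of_isHorizontal_of_apply_ne_zero (hC : HRConvex C) (hW : IsOpen W)
    (hWC : ∀ v ∈ W, ℓ v ≠ 0 → v ∈ C) (hp : p ∈ W) (hd : IsHorizontal p d) (hℓd : ℓ d ≠ 0) :
    p ∈ C := by
  by_cases hℓp : ℓ p = 0
  · apply hC.mem_of_eventually_add_smul_mem hd
    filter_upwards [(eventually_add_smul_mem hW hp d).filter_mono nhdsWithin_le_nhds,
      self_mem_nhdsWithin] with s hs hs0
    exact hWC _ hs (by simpa [hℓp] using ⟨hs0, hℓd⟩)
  · exact hWC p hp hℓp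

/- At a point where every horizontal direction lies in `ker ℓ`, moving along the first horizontal
direction makes the second one transverse to `ker ℓ`. -/
theorem HRConvex.subset_of_apply_ne_zero (hC : HRConvex C) (hW : IsOpen W) (hℓ : ℓ ≠ 0)
    (hWC : ∀ v ∈ W, ℓ v ≠ 0 → v ∈ C) : W ⊆ C := by
  intro p hp
  by_contra hpC
  have hchar (d : Fin 4 → ℝ) (hd : IsHorizontal p d) : ℓ d = 0 := by
    by_contra hℓd
    exact hpC (hC.mem_of_isHorizontal_of_apply_ne_zero hW hWC hp hd hℓd)
  set e₃ : Fin 4 → ℝ := Pi.single 3 1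
  have hvert : ℓ e₃ ≠ 0 := by
    refine fun h => hℓ (ContinuousLinearMap.ext fun v => ?_)
    have hproj := hchar (v + (2 * (p 1 * v 0 - v 1 * p 0) - v 3) • e₃) (by simp [IsHorizontal, e₃])
    simpa [h] using hproj
  set X : Fin 4 → ℝ := ![1, 0, 0, 2 * p 1]
  set Y : Fin 4 → ℝ := ![0, 1, 0, -2 * p 0]
  have hX : IsHorizontal p X := by simp [IsHorizontal, X]
  have hY : ℓ Y = 0 := hchar Y (by simp [IsHorizontal, Y])
  refine hpC (hC.mem_of_eventually_add_smul_mem hX ?_)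
  filter_upwards [(eventually_add_smul_mem hW hp X).filter_mono nhdsWithin_le_nhds,
    self_mem_nhdsWithin] with s hs hs0
  have hYs : IsHorizontal (p + s • X) (Y - (2 * s) • e₃) := by
    simp [IsHorizontal, X, Y, e₃, mul_add, sub_eq_neg_add]
  exact hC.mem_of_isHorizontal_of_apply_ne_zero hW hWC hs hYs (by simpa [hY, hvert] using hs0)

theorem HRConvex.mem_interior_of_pos_of_neg (hC : HRConvex C) (hW : IsOpen W) (hp : p ∈ W)
    (hℓ : ℓ ≠ 0) (hpos : W ∩ {v | 0 < ℓ v} ⊆ C) (hneg : W ∩ {v | 0 < (-ℓ) v} ⊆ C) :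
    p ∈ interior C := by
  refine interior_maximal (hC.subset_of_apply_ne_zero hW hℓ fun v hv hℓv => ?_) hW hp
  rcases hℓv.lt_or_gt with h | h
  · exact hneg ⟨hv, by simpa using h⟩
  · exact hpos ⟨hv, h⟩

theorem PreciselyMonotone.isHalfSpaceOn_or_neg (hE : PreciselyMonotone E) (hp : p ∈ frontier E)
    (hℓ : ℓ ≠ 0) (hW : IsOpen W) (hWconv : Convex ℝ W) (hpW : p ∈ W)
    (hfr : frontier E ∩ W ⊆ {v | ℓ v = 0}) :
    IsHalfSpaceOn ℓ E W ∨ IsHalfSpaceOn (-ℓ) E W := by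
  have hfr' : frontier E ∩ W ⊆ {v | (-ℓ) v = 0} := by simpa using hfr
  rcases inter_pos_subset_or_subset_compl hWconv hfr with hpos | hpos <;>
    rcases inter_pos_subset_or_subset_compl hWconv hfr' with hneg | hneg
  · exact absurd (hE.1.mem_interior_of_pos_of_neg hW hpW hℓ hpos hneg) hp.2
  · exact .inl ⟨fun v hv h => hpos ⟨hv, h⟩, fun v hv h => hneg ⟨hv, by simpa using h⟩⟩
  · exact .inr ⟨fun v hv h => hneg ⟨hv, h⟩, fun v hv h => hpos ⟨hv, by simpa using h⟩⟩
  · rw [← frontier_compl] at hp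
    exact absurd (hE.2.mem_interior_of_pos_of_neg hW hpW hℓ hpos hneg) hp.2

theorem monotone_epigraph_global_general (hE : PreciselyMonotone E) (h0 : 0 ∈ frontier E)
    (hℓ : ℓ ≠ 0) {Ω : Set (Fin 4 → ℝ)} (hΩ : Ω ∈ 𝓝 0)
    (hloc : frontier E ∩ Ω ⊆ {v | ℓ v = 0}) : frontier E = {v | ℓ v = 0} := by
  obtain ⟨r, hr, hball⟩ := Metric.mem_nhds_iff.1 hΩ
  have h0ball := Metric.mem_ball_self (x := (0 : Fin 4 → ℝ)) hr
  have hfr : frontier E ∩ Metric.ball 0 r ⊆ {v | ℓ v = 0} :=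
    (inter_subset_inter_right _ hball).trans hloc
  rcases hE.isHalfSpaceOn_or_neg h0 hℓ Metric.isOpen_ball (convex_ball 0 r) h0ball hfr with h | h
  · exact (h.univ_of_preciselyMonotone hE Metric.isOpen_ball h0ball).frontier_eq hℓ
  · simpa using (h.univ_of_preciselyMonotone hE Metric.isOpen_ball h0ball).frontier_eq
      (neg_ne_zero.2 hℓ)

end PreciselyMonotone

/-- The linear functional whose kernel is the plane `x = ay + bt + cu`; the coordinates of `ℝ⁴` are
ordered `(x, y, u, t)`. -/
def graphForm (a b c : ℝ) : (Fin 4 → ℝ) →L[ℝ] ℝ :=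
  .proj 0 - (a • .proj 1 + b • .proj 3 + c • .proj 2)

theorem graphForm_eq_zero_iff {a b c : ℝ} {v : Fin 4 → ℝ} :
    graphForm a b c v = 0 ↔ v 0 = a * v 1 + b * v 3 + c * v 2 := by
  simp [graphForm, sub_eq_zero]

theorem graphForm_ne_zero (a b c : ℝ) : graphForm a b c ≠ 0 := fun h => by
  simpa [graphForm] using DFunLike.congr_fun h (Pi.single 0 1)

/-- **Monotone `(pX+qY)`-epigraphs (global statement):** if the boundary of `E`
coincides near the origin with the plane `x = ay + bt + cu`, then it coincides with
it globally. -/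
theorem monotone_epigraph_global
    (E : Set (Fin 4 → ℝ)) (hE : PreciselyMonotone E)
    (h0 : (0 : Fin 4 → ℝ) ∈ frontier E)
    (h1 : (![1, 0, 0, 0] : Fin 4 → ℝ) ∈ interior E)
    (a b c : ℝ) (Ω : Set (Fin 4 → ℝ)) (hΩ : IsOpen Ω) (h0Ω : (0 : Fin 4 → ℝ) ∈ Ω)
    (hloc : frontier E ∩ Ω = {v : Fin 4 → ℝ | v 0 = a * v 1 + b * v 3 + c * v 2} ∩ Ω) :
    frontier E = {v : Fin 4 → ℝ | v 0 = a * v 1 + b * v 3 + c * v 2} := by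
  simp only [← graphForm_eq_zero_iff] at hloc ⊢
  exact monotone_epigraph_global_general hE h0 (graphForm_ne_zero a b c) (hΩ.mem_nhds h0Ω)
    (hloc.trans_subset inter_subset_left)
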